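/- arXiv:math/9910160 — 2 statements merged into one kernel-verified Lean document; each statement's English description precedes it below -/
import Mathlib

section
/- Let K₁ ⊆ ℝ^{n₁} and K₂ ⊆ ℝ^{n₂} be nonempty closed bounded convex sets, and let f₁ : K₁ → ℝ, f₂ : K₂ → ℝ be continuous convex functions with ω₂(f₁;K₁) ≤ 1 and ω₂(f₂;K₂) ≤ 1. Define g : K₁ × K₂ → ℝ by g(x,y) = f₁(x) − f₂(y). Then (a) E₂(g;K₁×K₂) = E₂(f₁;K₁) + E₂(f₂;K₂), and (b) ω₂(g;K₁×K₂) ≤ 1. (Lemma 3.6.) -/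
/-!
If the affine function `c + φ x + ψ y` approximates `f x - g y` on `K × L` with error at most `r`,
then every value of `f - φ` is within `r` of every value of `g + ψ + c`. Two sets of reals with this
property lie in intervals about a common center whose radii add up to `r`, so the error `r` splits
into an error for `f` plus an error for `g`: the set of error bounds on `K × L` is the Minkowski sum
of those on `K` and `L`, and `sInf` is additive. For the modulus of smoothness, convexity places
both second differences in `[0, c]`, and hence their difference in `[-c, c]`.
-/

open Finset

/-- `diffBound m K f c` says that the `m`-th modulus of smoothness of `f` on `K` is at most `c`,
i.e. `|Δ_h^m f(x)| ≤ c` whenever `x, x+h, …, x+mh ∈ K`. -/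
def diffBound {E : Type*} [AddCommGroup E] [Module ℝ E] (m : ℕ) (K : Set E) (f : E → ℝ)
    (c : ℝ) : Prop :=
  ∀ x h : E, (∀ j : ℕ, j ≤ m → x + (j : ℝ) • h ∈ K) →
    |∑ j ∈ Finset.range (m + 1), (-1 : ℝ) ^ (m - j) * (m.choose j : ℝ) * f (x + (j : ℝ) • h)| ≤ c

lemma exists_common_center_of_forall_abs_sub_le {A B : Set ℝ} (hA : A.Nonempty) (hB : B.Nonempty)
    {r : ℝ} (h : ∀ a ∈ A, ∀ b ∈ B, |a - b| ≤ r) :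
    ∃ m s t : ℝ, s + t = r ∧ (∀ a ∈ A, |a - m| ≤ s) ∧ ∀ b ∈ B, |b - m| ≤ t := by
  have le_add : ∀ a ∈ A, ∀ b ∈ B, a ≤ b + r := fun a ha b hb ↦ by
    linarith [(abs_le.1 (h a ha b hb)).2]
  have sub_le : ∀ a ∈ A, ∀ b ∈ B, b - r ≤ a := fun a ha b hb ↦ by
    linarith [(abs_le.1 (h a ha b hb)).1]
  obtain ⟨b₀, hb₀⟩ := hB
  have hA_above : BddAbove A := ⟨b₀ + r, fun a ha ↦ le_add a ha b₀ hb₀⟩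
  have hA_below : BddBelow A := ⟨b₀ - r, fun a ha ↦ sub_le a ha b₀ hb₀⟩
  refine ⟨(sSup A + sInf A) / 2, (sSup A - sInf A) / 2, r - (sSup A - sInf A) / 2, by ring,
    fun a ha ↦ ?_, fun b hb ↦ ?_⟩
  · have a_le : a ≤ sSup A := le_csSup hA_above ha
    have le_a : sInf A ≤ a := csInf_le hA_below ha
    rw [abs_le]
    constructor <;> linarith
  · have sSup_le : sSup A ≤ b + r := csSup_le hA fun a ha ↦ le_add a ha b hb
    have le_sInf : b - r ≤ sInf A := le_csInf hA fun a ha ↦ sub_le a ha b hb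
    rw [abs_le]
    constructor <;> linarith

section ProductDifference

variable {E F : Type*} [AddCommGroup E] [Module ℝ E] [AddCommGroup F] [Module ℝ F]
  {K : Set E} {L : Set F} {f : E → ℝ} {g : F → ℝ} {c : ℝ}

/-- The set of `r` such that some affine function approximates `f` uniformly on `K` with error at
most `r`. The linear part of the affine function need not be continuous. -/
def affineErrorBounds (K : Set E) (f : E → ℝ) : Set ℝ :=
  {r | ∃ (c : ℝ) (φ : E →ₗ[ℝ] ℝ), ∀ x ∈ K, |f x - (c + φ x)| ≤ r}

/-- The error `E₂(f; K)` of best uniform approximation of `f` on `K` by affine functions, with the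
junk value `0` if `f` is at infinite distance from all of them, or if `K` is empty. -/
noncomputable def bestAffineError (K : Set E) (f : E → ℝ) : ℝ :=
  sInf (affineErrorBounds K f)

lemma bddBelow_affineErrorBounds (hK : K.Nonempty) (f : E → ℝ) :
    BddBelow (affineErrorBounds K f) := by
  obtain ⟨x, hx⟩ := hK
  exact ⟨0, fun _ ⟨_, _, hr⟩ ↦ (abs_nonneg _).trans (hr x hx)⟩

lemma affineErrorBounds_nonempty_of_isCompact [TopologicalSpace E] (hK : IsCompact K)
    (hf : ContinuousOn f K) : (affineErrorBounds K f).Nonempty := by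
  obtain ⟨C, hC⟩ := hK.exists_bound_of_continuousOn hf
  exact ⟨C, 0, 0, fun x hx ↦ by simpa using hC x hx⟩

lemma affineErrorBounds_prod (S : Set (E × F)) (u : E × F → ℝ) :
    affineErrorBounds S u =
      {r | ∃ (c : ℝ) (φ : E →ₗ[ℝ] ℝ) (ψ : F →ₗ[ℝ] ℝ),
        ∀ z ∈ S, |u z - (c + φ z.1 + ψ z.2)| ≤ r} := by
  simp only [affineErrorBounds, (LinearMap.coprodEquiv ℝ).surjective.exists, Prod.exists,
    LinearMap.coprodEquiv_apply, LinearMap.coprod_apply, add_assoc]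

lemma affineErrorBounds_pi {ι : Type*} [Fintype ι] (K : Set (ι → ℝ)) (f : (ι → ℝ) → ℝ) :
    affineErrorBounds K f =
      {r | ∃ (c : ℝ) (a : ι → ℝ), ∀ x ∈ K, |f x - (c + ∑ i, a i * x i)| ≤ r} := by
  classical
  simp only [affineErrorBounds, (dotProductEquiv ℝ ι).surjective.exists,
    dotProductEquiv_apply_apply, dotProduct]

lemma affineErrorBounds_prod_pi {ι κ : Type*} [Fintype ι] [Fintype κ]
    (S : Set ((ι → ℝ) × (κ → ℝ))) (u : (ι → ℝ) × (κ → ℝ) → ℝ) :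
    affineErrorBounds S u =
      {r | ∃ (c : ℝ) (a : ι → ℝ) (b : κ → ℝ),
        ∀ z ∈ S, |u z - (c + ∑ i, a i * z.1 i + ∑ j, b j * z.2 j)| ≤ r} := by
  classical
  simp only [affineErrorBounds_prod, (dotProductEquiv ℝ ι).surjective.exists,
    (dotProductEquiv ℝ κ).surjective.exists, dotProductEquiv_apply_apply, dotProduct]

lemma add_mem_affineErrorBounds_prod_sub {s t : ℝ} (hs : s ∈ affineErrorBounds K f)
    (ht : t ∈ affineErrorBounds L g) :
    s + t ∈ affineErrorBounds (K ×ˢ L) (fun z ↦ f z.1 - g z.2) := by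
  obtain ⟨c, φ, hφ⟩ := hs
  obtain ⟨d, ψ, hψ⟩ := ht
  rw [affineErrorBounds_prod]
  refine ⟨c - d, φ, -ψ, fun z ⟨hx, hy⟩ ↦ ?_⟩
  calc |f z.1 - g z.2 - (c - d + φ z.1 + (-ψ) z.2)|
      = |(f z.1 - (c + φ z.1)) - (g z.2 - (d + ψ z.2))| := by
        rw [LinearMap.neg_apply]
        ring_nf
    _ ≤ |f z.1 - (c + φ z.1)| + |g z.2 - (d + ψ z.2)| := abs_sub _ _
    _ ≤ s + t := add_le_add (hφ z.1 hx) (hψ z.2 hy)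

lemma exists_add_eq_of_mem_affineErrorBounds_prod_sub (hK : K.Nonempty) (hL : L.Nonempty) {r : ℝ}
    (hr : r ∈ affineErrorBounds (K ×ˢ L) (fun z ↦ f z.1 - g z.2)) :
    ∃ s ∈ affineErrorBounds K f, ∃ t ∈ affineErrorBounds L g, s + t = r := by
  rw [affineErrorBounds_prod] at hr
  obtain ⟨c, φ, ψ, h⟩ := hr
  have h_close : ∀ a ∈ (fun x ↦ f x - φ x) '' K, ∀ b ∈ (fun y ↦ g y + ψ y + c) '' L,
      |a - b| ≤ r := by
    rintro _ ⟨x, hx, rfl⟩ _ ⟨y, hy, rfl⟩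
    convert h (x, y) ⟨hx, hy⟩ using 2
    ring
  obtain ⟨m, s, t, hst, hs, ht⟩ :=
    exists_common_center_of_forall_abs_sub_le (hK.image _) (hL.image _) h_close
  rw [Set.forall_mem_image] at hs ht
  refine ⟨s, ⟨m, φ, fun x hx ↦ ?_⟩, t, ⟨m - c, -ψ, fun y hy ↦ ?_⟩, hst⟩
  · convert hs hx using 2
    ring
  · convert ht hy using 2
    rw [LinearMap.neg_apply]
    ring

open scoped Pointwise in
lemma affineErrorBounds_prod_sub (hK : K.Nonempty) (hL : L.Nonempty) :
    affineErrorBounds (K ×ˢ L) (fun z ↦ f z.1 - g z.2) =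
      affineErrorBounds K f + affineErrorBounds L g := by
  apply Set.Subset.antisymm
  · intro r hr
    exact Set.mem_add.2 (exists_add_eq_of_mem_affineErrorBounds_prod_sub hK hL hr)
  · rintro _ ⟨s, hs, t, ht, rfl⟩
    exact add_mem_affineErrorBounds_prod_sub hs ht

lemma bestAffineError_prod_sub (hK : K.Nonempty) (hL : L.Nonempty)
    (hf : (affineErrorBounds K f).Nonempty) (hg : (affineErrorBounds L g).Nonempty) :
    bestAffineError (K ×ˢ L) (fun z ↦ f z.1 - g z.2) =
      bestAffineError K f + bestAffineError L g := by
  rw [bestAffineError, affineErrorBounds_prod_sub hK hL]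
  exact csInf_add hf (bddBelow_affineErrorBounds hK f) hg (bddBelow_affineErrorBounds hL g)

lemma diffBound_two_iff :
    diffBound 2 K f c ↔ ∀ x h : E, x ∈ K → x + h ∈ K → x + (2 : ℝ) • h ∈ K →
      |f x - 2 * f (x + h) + f (x + (2 : ℝ) • h)| ≤ c := by
  simp [diffBound, Finset.sum_range_succ, Nat.le_succ_iff, or_imp, forall_and, sub_eq_add_neg]

lemma second_difference_nonneg_of_convexOn (hf : ConvexOn ℝ K f) {x h : E} (hx : x ∈ K)
    (hxh : x + (2 : ℝ) • h ∈ K) : 0 ≤ f x - 2 * f (x + h) + f (x + (2 : ℝ) • h) := by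
  have midpoint_eq : (1 / 2 : ℝ) • x + (1 / 2 : ℝ) • (x + (2 : ℝ) • h) = x + h := by module
  have jensen : f (x + h) ≤ 1 / 2 * f x + 1 / 2 * f (x + (2 : ℝ) • h) := by
    simpa only [midpoint_eq, smul_eq_mul] using
      hf.2 hx hxh one_half_pos.le one_half_pos.le (add_halves 1)
  linarith

lemma diffBound_two_prod_sub_of_convexOn (hf : ConvexOn ℝ K f) (hg : ConvexOn ℝ L g)
    (hfc : diffBound 2 K f c) (hgc : diffBound 2 L g c) :
    diffBound 2 (K ×ˢ L) (fun z ↦ f z.1 - g z.2) c := by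
  rw [diffBound_two_iff] at hfc hgc ⊢
  rintro ⟨x, y⟩ ⟨h, k⟩ ⟨hx, hy⟩ ⟨hxh, hyk⟩ ⟨hxh₂, hyk₂⟩
  calc |f x - g y - 2 * (f (x + h) - g (y + k)) + (f (x + (2 : ℝ) • h) - g (y + (2 : ℝ) • k))|
      = |(f x - 2 * f (x + h) + f (x + (2 : ℝ) • h)) -
          (g y - 2 * g (y + k) + g (y + (2 : ℝ) • k))| := congrArg abs (by ring)
    _ ≤ c := abs_sub_le_of_nonneg_of_le
        (second_difference_nonneg_of_convexOn hf hx hxh₂) (le_of_abs_le (hfc x h hx hxh hxh₂))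
        (second_difference_nonneg_of_convexOn hg hy hyk₂) (le_of_abs_le (hgc y k hy hyk hyk₂))

theorem product_difference_of_convex_general (hK : K.Nonempty) (hL : L.Nonempty)
    (hf_approx : (affineErrorBounds K f).Nonempty) (hg_approx : (affineErrorBounds L g).Nonempty)
    (hf : ConvexOn ℝ K f) (hg : ConvexOn ℝ L g)
    (hfc : diffBound 2 K f c) (hgc : diffBound 2 L g c) :
    bestAffineError (K ×ˢ L) (fun z ↦ f z.1 - g z.2) =
        bestAffineError K f + bestAffineError L g ∧
      diffBound 2 (K ×ˢ L) (fun z ↦ f z.1 - g z.2) c :=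
  ⟨bestAffineError_prod_sub hK hL hf_approx hg_approx,
    diffBound_two_prod_sub_of_convexOn hf hg hfc hgc⟩

end ProductDifference

/-- Lemma 3.6: for convex `f₁`, `f₂` with `ω₂ ≤ 1`, the function `g(x,y) = f₁(x) − f₂(y)`
satisfies `E₂(g;K₁×K₂) = E₂(f₁;K₁) + E₂(f₂;K₂)` and `ω₂(g;K₁×K₂) ≤ 1`. -/
theorem product_difference_of_convex (n₁ n₂ : ℕ)
    (K₁ : Set (Fin n₁ → ℝ)) (K₂ : Set (Fin n₂ → ℝ))
    (h₁ne : K₁.Nonempty) (h₁cl : IsClosed K₁) (h₁bd : Bornology.IsBounded K₁)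
    (h₁cv : Convex ℝ K₁)
    (h₂ne : K₂.Nonempty) (h₂cl : IsClosed K₂) (h₂bd : Bornology.IsBounded K₂)
    (h₂cv : Convex ℝ K₂)
    (f₁ : (Fin n₁ → ℝ) → ℝ) (f₂ : (Fin n₂ → ℝ) → ℝ)
    (hf₁c : ContinuousOn f₁ K₁) (hf₂c : ContinuousOn f₂ K₂)
    (hf₁cv : ConvexOn ℝ K₁ f₁) (hf₂cv : ConvexOn ℝ K₂ f₂)
    (hω₁ : diffBound 2 K₁ f₁ 1) (hω₂ : diffBound 2 K₂ f₂ 1) :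
    (sInf {r : ℝ | ∃ (c : ℝ) (a : Fin n₁ → ℝ) (b : Fin n₂ → ℝ), ∀ z ∈ K₁ ×ˢ K₂,
        |f₁ z.1 - f₂ z.2 - (c + (∑ i, a i * z.1 i) + (∑ j, b j * z.2 j))| ≤ r} =
      sInf {r : ℝ | ∃ (c : ℝ) (a : Fin n₁ → ℝ), ∀ x ∈ K₁, |f₁ x - (c + ∑ i, a i * x i)| ≤ r} +
      sInf {r : ℝ | ∃ (c : ℝ) (a : Fin n₂ → ℝ), ∀ y ∈ K₂, |f₂ y - (c + ∑ j, a j * y j)| ≤ r}) ∧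
    diffBound 2 (K₁ ×ˢ K₂) (fun z => f₁ z.1 - f₂ z.2) 1 := by
  have h₁ := affineErrorBounds_nonempty_of_isCompact
    (Metric.isCompact_of_isClosed_isBounded h₁cl h₁bd) hf₁c
  have h₂ := affineErrorBounds_nonempty_of_isCompact
    (Metric.isCompact_of_isClosed_isBounded h₂cl h₂bd) hf₂c
  simpa only [bestAffineError, affineErrorBounds_pi, affineErrorBounds_prod_pi] using
    product_difference_of_convex_general h₁ne h₂ne h₁ h₂ hf₁cv hf₂cv hω₁ hω₂
end

section
/- For n ≥ 1 let Sⁿ := {u ∈ ℝ^{n+1} : u_i ≥ 0, ∑_{i=1}^{n+1} u_i = 1} and define f_n : Sⁿ → ℝ by f_n(u) = (1/2) ∑_{k=1}^{n+1} u_k log₂ u_k (with the convention 0·log₂ 0 = 0). Then f_n is continuous and convex, ω₂(f_n;Sⁿ) ≤ 1, and for every affine function φ on ℝ^{n+1} one has sup_{u∈Sⁿ} |f_n(u) − φ(u)| ≥ (1/4) log₂(n+1). In particular E₂(f_n;Sⁿ) ≥ (1/4) log₂(n+1). (Lower bound in Theorem 3.7: w₂(Sⁿ) ≥ (1/4) log₂(n+1).)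 -/
open Finset

/-!
Write `f` for half the negative entropy in bits.

The entropy of a mixture exceeds the mixture of the entropies by at most the entropy of the mixing
weights. For equal weights this is one bit, so the second differences of `f` are at most `1`.

An affine function satisfies Jensen's inequality with equality. Hence, if `f` is uniformly within
`δ` of one, every Jensen gap of `f` is at most `2 * δ`. But `f` vanishes at the vertices of the
simplex and equals `-(1 / 2) * log₂ (n + 1)` at the barycenter, so the gap there is
`(1 / 2) * log₂ (n + 1)`.
-/

lemma diffBound_two_of_convexOn {E : Type*} [AddCommGroup E] [Module ℝ E] {K : Set E} {f : E → ℝ}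
    {c : ℝ} (hf : ConvexOn ℝ K f)
    (hc : ∀ x ∈ K, ∀ y ∈ K, f x + f y - 2 * f (midpoint ℝ x y) ≤ c) : diffBound 2 K f c := by
  intro x h hK
  have hx : x ∈ K := by simpa using hK 0 (by norm_num)
  have hy : x + (2 : ℝ) • h ∈ K := by simpa using hK 2 le_rfl
  have hmid : midpoint ℝ x (x + (2 : ℝ) • h) = x + h := by
    rw [midpoint_eq_smul_add, invOf_eq_inv]
    module
  have hconv := hf.2 hx hy (by norm_num : (0 : ℝ) ≤ 1 / 2) (by norm_num : (0 : ℝ) ≤ 1 / 2)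
    (by norm_num)
  rw [show (1 / 2 : ℝ) • x + (1 / 2 : ℝ) • (x + (2 : ℝ) • h) = x + h by module,
    smul_eq_mul, smul_eq_mul] at hconv
  have hupper := hc x hx _ hy
  rw [hmid] at hupper
  have hdiff : ∑ j ∈ range (2 + 1), (-1 : ℝ) ^ (2 - j) * ((2 : ℕ).choose j : ℝ) *
      f (x + (j : ℝ) • h) = f x + f (x + (2 : ℝ) • h) - 2 * f (x + h) := by
    simp only [sum_range_succ, sum_range_zero, Nat.choose_zero_right, Nat.choose_one_right,
      Nat.choose_self, Nat.cast_zero, Nat.cast_one, Nat.cast_ofNat, zero_smul, one_smul, add_zero]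
    ring
  rw [hdiff, abs_of_nonneg (by linarith)]
  exact hupper

section AffineApproximation

variable {ι E : Type*} [Fintype ι] [AddCommGroup E] [Module ℝ E]

lemma affineMap_sum_smul_eq (φ : E →ᵃ[ℝ] ℝ) {w : ι → ℝ} (hw : ∑ i, w i = 1) (p : ι → E) :
    φ (∑ i, w i • p i) = ∑ i, w i * φ (p i) := by
  have h := univ.map_affineCombination p w hw φ
  simpa only [affineCombination_eq_linear_combination _ _ _ hw, Function.comp_apply,
    smul_eq_mul] using h

lemma exists_half_jensen_gap_le_abs_sub_affineMap {K : Set E} (hK : Convex ℝ K) {w : ι → ℝ}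
    (hw : w ∈ stdSimplex ℝ ι) {p : ι → E} (hp : ∀ i, p i ∈ K) (f : E → ℝ) (φ : E →ᵃ[ℝ] ℝ) :
    ∃ x ∈ K, (∑ i, w i * f (p i) - f (∑ i, w i • p i)) / 2 ≤ |f x - φ x| := by
  set q := ∑ i, w i • p i
  set δ := (∑ i, w i * f (p i) - f q) / 2 with hδ
  by_contra! hlt
  have hmean : ∑ i, w i * (f (p i) - φ (p i)) ≤ δ := calc
    ∑ i, w i * (f (p i) - φ (p i)) ≤ ∑ i, w i * δ :=
      sum_le_sum fun i _ ↦ mul_le_mul_of_nonneg_left (abs_lt.1 (hlt _ (hp i))).2.le (hw.1 i)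
    _ = δ := by rw [← sum_mul, hw.2, one_mul]
  have hcenter : -δ < f q - φ q :=
    (abs_lt.1 (hlt q (hK.sum_mem (fun i _ ↦ hw.1 i) hw.2 fun i _ ↦ hp i))).1
  have hφ : φ q = ∑ i, w i * φ (p i) := affineMap_sum_smul_eq φ hw.2 p
  simp only [mul_sub, sum_sub_distrib] at hmean
  linarith

end AffineApproximation

section Entropy

variable {ι : Type*} [Fintype ι]

/-- The Shannon entropy, in nats, of a vector of weights. The weights are not required to sum
to `1`, so that concavity can be stated on the whole nonnegative orthant. -/
noncomputable def shannonEntropy (u : ι → ℝ) : ℝ :=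
  ∑ i, Real.negMulLog (u i)

lemma continuous_shannonEntropy : Continuous (shannonEntropy : (ι → ℝ) → ℝ) := by
  unfold shannonEntropy
  fun_prop

lemma concaveOn_shannonEntropy :
    ConcaveOn ℝ (Set.Ici 0) (shannonEntropy : (ι → ℝ) → ℝ) := by
  refine ⟨convex_Ici 0, fun x hx y hy s t hs ht hst ↦ ?_⟩
  simp only [shannonEntropy, smul_sum, ← sum_add_distrib]
  exact sum_le_sum fun i _ ↦ Real.concaveOn_negMulLog.2 (hx i) (hy i) hs ht hst

lemma negMulLog_add_le {x y : ℝ} (hx : 0 ≤ x) (hy : 0 ≤ y) :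
    Real.negMulLog (x + y) ≤ Real.negMulLog x + Real.negMulLog y := by
  have hmul_log {a b : ℝ} (ha : 0 ≤ a) (hb : 0 ≤ b) : a * Real.log a ≤ a * Real.log (a + b) := by
    rcases ha.eq_or_lt with rfl | ha
    · simp
    · gcongr
      linarith
  have h₁ := hmul_log hx hy
  have h₂ := hmul_log hy hx
  rw [add_comm y x] at h₂
  simp only [Real.negMulLog]
  linarith

lemma shannonEntropy_smul_add_smul_le {x y : ι → ℝ} (hx : x ∈ stdSimplex ℝ ι)
    (hy : y ∈ stdSimplex ℝ ι) {s t : ℝ} (hs : 0 ≤ s) (ht : 0 ≤ t) :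
    shannonEntropy (s • x + t • y) ≤
      s * shannonEntropy x + t * shannonEntropy y + (Real.negMulLog s + Real.negMulLog t) := calc
  shannonEntropy (s • x + t • y)
    ≤ ∑ i, (Real.negMulLog (s * x i) + Real.negMulLog (t * y i)) :=
      sum_le_sum fun i _ ↦ negMulLog_add_le (mul_nonneg hs (hx.1 i)) (mul_nonneg ht (hy.1 i))
  _ = s * shannonEntropy x + t * shannonEntropy y + (Real.negMulLog s + Real.negMulLog t) := by
    simp only [Real.negMulLog_mul, sum_add_distrib, ← sum_mul, ← mul_sum, hx.2, hy.2,
      shannonEntropy]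
    ring

lemma shannonEntropy_single [DecidableEq ι] (i : ι) :
    shannonEntropy (Pi.single i 1 : ι → ℝ) = 0 := by
  refine sum_eq_zero fun j _ ↦ ?_
  rcases eq_or_ne j i with rfl | hji
  · simp
  · simp [hji]

lemma shannonEntropy_barycenter [Nonempty ι] :
    shannonEntropy (stdSimplex.barycenter : stdSimplex ℝ ι).val = Real.log (Fintype.card ι) := by
  simp [shannonEntropy, stdSimplex.barycenter_apply, Real.negMulLog]

/-- Half of the negative Shannon entropy in bits, which is the paper's `f_n` when `ι` has `n + 1`
elements. The convention `0 * log₂ 0 = 0` is automatic, as `Real.logb 2 0` is the junk value `0`. -/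
noncomputable def halfNegEntropy (u : ι → ℝ) : ℝ :=
  (1 / 2) * ∑ k, u k * Real.logb 2 (u k)

lemma halfNegEntropy_eq_neg_shannonEntropy_div (u : ι → ℝ) :
    halfNegEntropy u = -shannonEntropy u / (2 * Real.log 2) := by
  simp only [halfNegEntropy, shannonEntropy, Real.negMulLog, Real.logb, neg_mul, sum_neg_distrib,
    neg_neg, ← mul_div_assoc, ← sum_div]
  field_simp

lemma continuous_halfNegEntropy : Continuous (halfNegEntropy : (ι → ℝ) → ℝ) := by
  simp only [funext halfNegEntropy_eq_neg_shannonEntropy_div]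
  exact continuous_shannonEntropy.neg.div_const _

lemma convexOn_halfNegEntropy : ConvexOn ℝ (Set.Ici 0) (halfNegEntropy : (ι → ℝ) → ℝ) := by
  have hlog : 0 ≤ (2 * Real.log 2)⁻¹ := by positivity
  refine (concaveOn_shannonEntropy.neg.smul hlog).congr fun u _ ↦ ?_
  simp only [halfNegEntropy_eq_neg_shannonEntropy_div, Pi.neg_apply, smul_eq_mul, div_eq_inv_mul]

lemma convexOn_stdSimplex_halfNegEntropy :
    ConvexOn ℝ (stdSimplex ℝ ι) (halfNegEntropy : (ι → ℝ) → ℝ) :=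
  convexOn_halfNegEntropy.subset (fun _ hu ↦ hu.1) (convex_stdSimplex ℝ ι)

lemma halfNegEntropy_add_sub_two_mul_midpoint_le {x y : ι → ℝ} (hx : x ∈ stdSimplex ℝ ι)
    (hy : y ∈ stdSimplex ℝ ι) :
    halfNegEntropy x + halfNegEntropy y - 2 * halfNegEntropy (midpoint ℝ x y) ≤ 1 := by
  have hmix := shannonEntropy_smul_add_smul_le hx hy
    (by norm_num : (0 : ℝ) ≤ 2⁻¹) (by norm_num : (0 : ℝ) ≤ 2⁻¹)
  have hbit : Real.negMulLog 2⁻¹ + Real.negMulLog 2⁻¹ = Real.log 2 := by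
    simp only [Real.negMulLog, Real.log_inv]
    ring
  rw [hbit, ← smul_add, ← invOf_eq_inv, ← midpoint_eq_smul_add, invOf_eq_inv] at hmix
  have hlog : 0 < Real.log 2 := Real.log_pos one_lt_two
  simp only [halfNegEntropy_eq_neg_shannonEntropy_div]
  field_simp
  linarith

lemma diffBound_two_halfNegEntropy :
    diffBound 2 (stdSimplex ℝ ι) (halfNegEntropy : (ι → ℝ) → ℝ) 1 :=
  diffBound_two_of_convexOn convexOn_stdSimplex_halfNegEntropy
    fun _ hx _ hy ↦ halfNegEntropy_add_sub_two_mul_midpoint_le hx hy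

lemma exists_quarter_logb_card_le_abs_halfNegEntropy_sub [Nonempty ι] (φ : (ι → ℝ) →ᵃ[ℝ] ℝ) :
    ∃ u ∈ stdSimplex ℝ ι, (1 / 4) * Real.logb 2 (Fintype.card ι) ≤ |halfNegEntropy u - φ u| := by
  classical
  let b : stdSimplex ℝ ι := stdSimplex.barycenter
  have hvertex (i : ι) : halfNegEntropy (Pi.single i 1 : ι → ℝ) = 0 := by
    simp [halfNegEntropy_eq_neg_shannonEntropy_div, shannonEntropy_single]
  have hcenter : halfNegEntropy b.val = -(1 / 2) * Real.logb 2 (Fintype.card ι) := by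
    rw [halfNegEntropy_eq_neg_shannonEntropy_div, shannonEntropy_barycenter, Real.logb]
    ring
  have hsum : ∑ i, b.val i • (Pi.single i 1 : ι → ℝ) = b.val := (pi_eq_sum_univ' b.val).symm
  obtain ⟨u, hu, hgap⟩ := exists_half_jensen_gap_le_abs_sub_affineMap (convex_stdSimplex ℝ ι) b.2
    (single_mem_stdSimplex ℝ) halfNegEntropy φ
  refine ⟨u, hu, le_trans (le_of_eq ?_) hgap⟩
  simp only [hvertex, hsum, hcenter, mul_zero, sum_const_zero]
  ring

end Entropy

/-- Lower bound in Theorem 3.7: the entropy function `f_n(u) = (1/2)∑ u_k log₂ u_k` on the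
standard simplex is continuous, convex, has `ω₂ ≤ 1`, and is at distance at least
`(1/4) log₂(n+1)` from every affine function. -/
theorem simplex_entropy_lower_bound (n : ℕ) (hn : 1 ≤ n) :
    ContinuousOn (fun u : Fin (n + 1) → ℝ => (1 / 2) * ∑ k, u k * Real.logb 2 (u k))
      (stdSimplex ℝ (Fin (n + 1))) ∧
    ConvexOn ℝ (stdSimplex ℝ (Fin (n + 1)))
      (fun u : Fin (n + 1) → ℝ => (1 / 2) * ∑ k, u k * Real.logb 2 (u k)) ∧
    diffBound 2 (stdSimplex ℝ (Fin (n + 1)))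
      (fun u : Fin (n + 1) → ℝ => (1 / 2) * ∑ k, u k * Real.logb 2 (u k)) 1 ∧
    ∀ (c : ℝ) (a : Fin (n + 1) → ℝ), ∃ u ∈ stdSimplex ℝ (Fin (n + 1)),
      (1 / 4) * Real.logb 2 (n + 1) ≤
        |(1 / 2) * (∑ k, u k * Real.logb 2 (u k)) - (c + ∑ i, a i * u i)| := by
  refine ⟨continuous_halfNegEntropy.continuousOn, convexOn_stdSimplex_halfNegEntropy,
    diffBound_two_halfNegEntropy, fun c a ↦ ?_⟩
  let φ : (Fin (n + 1) → ℝ) →ᵃ[ℝ] ℝ :=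
    AffineMap.const ℝ _ c + (Fintype.linearCombination ℝ a).toAffineMap
  have hφ (u : Fin (n + 1) → ℝ) : φ u = c + ∑ i, a i * u i := by
    simp [φ, Fintype.linearCombination_apply, mul_comm]
  simpa [hφ, halfNegEntropy] using exists_quarter_logb_card_le_abs_halfNegEntropy_sub φ
end
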